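/- Let M be a compact connected boundaryless topological manifold of dimension n with a compatible metric and let f : M → M be an expansive homeomorphism. Then for every k with 1 ≤ k ≤ n−1, the set Per_H^k is open in Per_H: for every p ∈ Per_H^k there exists an open neighborhood V of p in M such that Per_H ∩ V ⊆ Per_H^k. -/

import Mathlib

open Metric Set

variable {M : Type*} [MetricSpace M]

/-- Iterates of a homeomorphism, indexed by `ℤ`. -/
def iterZ (f : M ≃ₜ M) (k : ℤ) (x : M) : M := (f.toEquiv ^ k) x

/-- `f` is expansive with expansivity constant `α`. -/
def IsExpansive (f : M ≃ₜ M) (α : ℝ) : Prop :=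
  ∀ x y : M, x ≠ y → ∃ k : ℤ, α < dist (iterZ f k x) (iterZ f k y)

/-- Stable set of `x`. -/
def Ws (f : M ≃ₜ M) (x : M) : Set M :=
  {y | Filter.Tendsto (fun k : ℤ => dist (iterZ f k x) (iterZ f k y)) Filter.atTop (nhds 0)}

/-- Unstable set of `x`. -/
def Wu (f : M ≃ₜ M) (x : M) : Set M :=
  {y | Filter.Tendsto (fun k : ℤ => dist (iterZ f k x) (iterZ f k y)) Filter.atBot (nhds 0)}

/-- Local (`ε`-local) stable set of `x`. -/
def WsLoc (f : M ≃ₜ M) (ε : ℝ) (x : M) : Set M :=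
  {y | ∀ k : ℤ, 0 ≤ k → dist (iterZ f k x) (iterZ f k y) ≤ ε}

/-- Local (`ε`-local) unstable set of `x`. -/
def WuLoc (f : M ≃ₜ M) (ε : ℝ) (x : M) : Set M :=
  {y | ∀ k : ℤ, k ≤ 0 → dist (iterZ f k x) (iterZ f k y) ≤ ε}

/-- The model space `ℝ^r × ℝ^{n-r}`. -/
abbrev ModelSp (n r : ℕ) := (Fin r → ℝ) × (Fin (n - r) → ℝ)

/-- The model hyperbolic linear map `L(a,b) = (a/2, 2b)`. -/
noncomputable def modelL (n r : ℕ) : ModelSp n r → ModelSp n r :=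
  fun q => (fun i => q.1 i / 2, fun i => 2 * q.2 i)

/-- Topologically hyperbolic periodic points of index `r` (`Per_H^r`). -/
def PerHr (f : M ≃ₜ M) (n r : ℕ) : Set M :=
  {p | ∃ l : ℕ, 1 ≤ l ∧ (f.toEquiv ^ l) p = p ∧
    ∃ (U : Set M) (V : Set (ModelSp n r)) (h : U ≃ₜ V),
      IsOpen U ∧ IsOpen V ∧ (0 : ModelSp n r) ∈ V ∧
      ∃ hp : p ∈ U, ((h ⟨p, hp⟩ : V) : ModelSp n r) = 0 ∧
        ∀ z : M, ∀ hz : z ∈ U, ∀ hz' : (f.toEquiv ^ l) z ∈ U,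
          ((h ⟨(f.toEquiv ^ l) z, hz'⟩ : V) : ModelSp n r) = modelL n r (h ⟨z, hz⟩)}

/-- All topologically hyperbolic periodic points (`Per_H`). -/
def PerH (f : M ≃ₜ M) (n : ℕ) : Set M := ⋃ r ∈ Finset.range (n + 1), PerHr f n r

/-- `p` admits a local product structure. -/
def AdmitsLPS (f : M ≃ₜ M) (n : ℕ) (p : M) : Prop :=
  ∃ (k : ℕ) (h : (Fin k → ℝ) × (Fin (n - k) → ℝ) → M) (ε : ℝ),
    0 < ε ∧ Topology.IsEmbedding h ∧ p ∈ Set.range h ∧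
    ∀ x : Fin k → ℝ, ∀ y : Fin (n - k) → ℝ,
      h '' ({x} ×ˢ univ) = WsLoc f ε (h (x, y)) ∩ Set.range h ∧
      h '' (univ ×ˢ {y}) = WuLoc f ε (h (x, y)) ∩ Set.range h

/-
Let `q ∈ Per_H` be close to `p ∈ Per_H`, and take a hyperbolic chart at `p` with contracting factor
`A` and expanding factor `B`. In a small box of this chart the local stable set of `q` is a thin
horizontal set, its local unstable set is a disc crossing the box vertically, and by expansivity
they meet only at `q`. If the unstable dimension `dim E` of `q` were smaller than `dim B`, general
position would allow the disc to be pushed off the horizontal set through the box, keeping its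
boundary away from that set. But the unstable coordinate of `q`, which cuts out the local stable set
and restricts to a linear isomorphism on the disc near `q`, gives the intersection degree one, and
such an intersection cannot be removed: this is Brouwer's theorem, proved here by integrating a
Jacobian determinant. Hence `dim B ≤ dim E`; applied to `f⁻¹`, the same inequality bounds the stable
dimension, so the index is constant near `p`.
-/

open Filter MeasureTheory Module Topology
open scoped NNReal

section Degree

lemma det_one_add_eq_sum {K V : Type*} [Field K] [DecidableEq K] [AddCommGroup V]
    [Module K V] [FiniteDimensional K V] (A : V →ₗ[K] V) (s : Finset K)
    (hs : finrank K V < s.card) :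
    LinearMap.det (1 + A) =
      ∑ t ∈ s, LinearMap.det (1 + t • A) * (Lagrange.basis s id t).eval 1 := by
  let b := finBasis K V
  let P : Polynomial K := Matrix.det ((Polynomial.X : Polynomial K) •
    (LinearMap.toMatrix b b A).map Polynomial.C + (1 : Matrix _ _ K).map Polynomial.C)
  have eval_P (t : K) : P.eval t = LinearMap.det (1 + t • A) := by
    rw [← LinearMap.det_toMatrix b, ← Polynomial.coe_evalRingHom, RingHom.map_det]
    congr 1
    ext i j
    simp only [map_add, map_smul, map_one, Matrix.map_one, map_zero, add_comm,
      RingHom.mapMatrix_apply, Polynomial.coe_evalRingHom, Matrix.map_apply, Matrix.add_apply,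
      Matrix.one_apply, Matrix.smul_apply, smul_eq_mul, Polynomial.X_mul_C, Polynomial.eval_mul,
      Polynomial.eval_C, Polynomial.eval_X, LinearMap.toMatrix_one]
    split_ifs <;> simp [mul_comm]
  have degree_P : P.degree < s.card :=
    Polynomial.degree_le_natDegree.trans_lt <| Nat.cast_lt.2 <|
      (Polynomial.natDegree_det_X_add_C_le _ _).trans_lt (by simpa using hs)
  calc LinearMap.det (1 + A) = P.eval 1 := by rw [eval_P, one_smul]
    _ = (Lagrange.interpolate s id fun t => P.eval t).eval 1 :=
      congrArg (Polynomial.eval 1) (Lagrange.eq_interpolate (injOn_id _) degree_P)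
    _ = _ := by simp only [Lagrange.interpolate_apply, Polynomial.eval_finsetSum,
      Polynomial.eval_mul, Polynomial.eval_C, eval_P]

variable {E : Type*} [NormedAddCommGroup E] [NormedSpace ℝ E]

lemma lipschitzWith_indicator_closedBall {R : ℝ} {u : E → E} {K : ℝ≥0}
    (hu : LipschitzOnWith K u (closedBall 0 R)) (hu₀ : ∀ x ∈ sphere (0 : E) R, u x = 0) :
    LipschitzWith K ((closedBall (0 : E) R).indicator u) := by
  have dist_exit {x y : E} (hx : x ∈ closedBall 0 R) (hy : y ∉ closedBall 0 R) :
      dist (u x) 0 ≤ K * dist x y := by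
    rw [mem_closedBall_zero_iff] at hx hy
    obtain ⟨z, hz, hzR⟩ := (convex_segment x y).isPreconnected.intermediate_value
      (left_mem_segment ℝ x y) (right_mem_segment ℝ x y) continuous_norm.continuousOn
      ⟨hx, (not_le.1 hy).le⟩
    calc dist (u x) 0 = dist (u x) (u z) := by rw [hu₀ z (by simpa using hzR)]
      _ ≤ K * dist x z := hu.dist_le_mul x (by simpa using hx) z (by simpa using hzR.le)
      _ ≤ K * dist x y := by
        gcongr
        simpa [dist_comm] using segment_subset_closedBall_left x y hz
  refine LipschitzWith.of_dist_le_mul fun x y => ?_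
  by_cases hx : x ∈ closedBall (0 : E) R <;> by_cases hy : y ∈ closedBall (0 : E) R
  · simpa only [indicator_of_mem, hx, hy] using hu.dist_le_mul x hx y hy
  · simpa only [indicator_of_mem hx, indicator_of_notMem hy] using dist_exit hx hy
  · simpa only [indicator_of_notMem hx, indicator_of_mem hy, dist_comm] using dist_exit hy hx
  · simpa only [indicator_of_notMem, hx, hy, not_false_eq_true, dist_self] using by positivity

lemma bijOn_closedBall_id_add [CompleteSpace E] {R : ℝ} {u : E → E} {K : ℝ≥0} (hK : K < 1)
    (hu : LipschitzOnWith K u (closedBall 0 R)) (hu₀ : ∀ x ∈ sphere (0 : E) R, u x = 0) :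
    BijOn (fun x => x + u x) (closedBall 0 R) (closedBall 0 R) := by
  set g : E → E := fun x => x + (closedBall 0 R).indicator u x with hg
  have g_approx : ApproximatesLinearOn g (ContinuousLinearEquiv.refl ℝ E : E →L[ℝ] E) univ K := by
    intro x _ y _
    have : g x - g y - (x - y) =
        (closedBall 0 R).indicator u x - (closedBall 0 R).indicator u y := by
      simp only [hg]
      abel
    simpa [this, dist_eq_norm] using
      (lipschitzWith_indicator_closedBall hu hu₀).dist_le_mul x y
  have contract : Subsingleton E ∨
      K < ‖((ContinuousLinearEquiv.refl ℝ E).symm : E →L[ℝ] E)‖₊⁻¹ :=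
    (subsingleton_or_nontrivial E).imp_right fun (_ : Nontrivial E) => by simpa using hK
  have g_inj : Function.Injective g := injOn_univ.1 (g_approx.injOn contract)
  have g_surj : Function.Surjective g := g_approx.surjective contract
  have g_out {x : E} (hx : x ∉ closedBall 0 R) : g x = x := by
    simp [hg, indicator_of_notMem hx]
  have g_bij : BijOn g (closedBall 0 R) (closedBall 0 R) := by
    refine ⟨fun x hx => ?_, g_inj.injOn, fun y hy => ?_⟩
    · by_contra hgx
      exact hgx (by rwa [g_inj (g_out hgx)])
    · obtain ⟨x, rfl⟩ := g_surj y
      by_contra hx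
      exact hx ⟨x, by_contra fun hxB => hxB (g_out hxB ▸ hy), rfl⟩
  exact g_bij.congr fun x hx => by simp [hg, indicator_of_mem hx]

variable [FiniteDimensional ℝ E]

lemma det_one_add_pos_of_norm_lt_one {A : E →L[ℝ] E} (hA : ‖A‖ < 1) : 0 < (1 + A).det := by
  have det_ne_zero {t : ℝ} (ht : t ∈ Icc (0 : ℝ) 1) : (1 + t • A).det ≠ 0 := by
    have : ‖-(t • A)‖ < 1 := by
      rw [norm_neg, norm_smul, Real.norm_of_nonneg ht.1]
      exact (mul_le_of_le_one_left (norm_nonneg A) ht.2).trans_lt hA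
    have unit : IsUnit (1 + t • A) := by simpa using isUnit_one_sub_of_norm_lt_one this
    exact (LinearMap.isUnit_det _ (unit.map ContinuousLinearMap.toLinearMapRingHom)).ne_zero
  have det_cont : Continuous fun t : ℝ => (1 + t • A).det :=
    ContinuousLinearMap.continuous_det.comp (by fun_prop)
  by_contra! h
  obtain ⟨t, ht, ht₀⟩ := intermediate_value_Icc' zero_le_one det_cont.continuousOn
    (show (0 : ℝ) ∈ Icc _ _ from ⟨by simpa using h, by simp [ContinuousLinearMap.det]⟩)
  exact det_ne_zero ht ht₀

variable [MeasurableSpace E] [BorelSpace E] (μ : Measure E) [μ.IsAddHaarMeasure]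

lemma integral_det_one_add_fderiv_of_norm_le {R : ℝ} {u : E → E} (hu : ContDiff ℝ 1 u)
    (hu₀ : ∀ x ∈ sphere (0 : E) R, u x = 0) {K : ℝ≥0} (hK : K < 1)
    (hDu : ∀ x ∈ closedBall (0 : E) R, ‖fderiv ℝ u x‖₊ ≤ K) :
    ∫ x in closedBall 0 R, (1 + fderiv ℝ u x).det ∂μ = μ.real (closedBall 0 R) := by
  have u_diff : Differentiable ℝ u := hu.differentiable one_ne_zero
  have u_lip : LipschitzOnWith K u (closedBall 0 R) :=
    (convex_closedBall 0 R).lipschitzOnWith_of_nnnorm_fderiv_le (𝕜 := ℝ) (fun x _ => u_diff x) hDu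
  have bij := bijOn_closedBall_id_add hK u_lip hu₀
  have det_pos (x : E) (hx : x ∈ closedBall 0 R) : 0 < (1 + fderiv ℝ u x).det :=
    det_one_add_pos_of_norm_lt_one ((hDu x hx).trans_lt hK)
  calc ∫ x in closedBall 0 R, (1 + fderiv ℝ u x).det ∂μ
      = ∫ x in closedBall 0 R, |(1 + fderiv ℝ u x).det| • (1 : ℝ) ∂μ :=
        setIntegral_congr_fun measurableSet_closedBall fun x hx => by
          simp [abs_of_pos (det_pos x hx)]
    _ = ∫ _ in (fun x => x + u x) '' closedBall 0 R, (1 : ℝ) ∂μ :=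
        (integral_image_eq_integral_abs_det_fderiv_smul μ measurableSet_closedBall
          (fun x _ => ((hasFDerivAt_id x).fun_add (u_diff x).hasFDerivAt).hasFDerivWithinAt)
          bij.injOn fun _ => 1).symm
    _ = μ.real (closedBall 0 R) := by simp [bij.image_eq]

/- Both sides are polynomials in `t` once `u` is replaced by `t • u`; they agree for small `t`. -/
lemma integral_det_one_add_fderiv {R : ℝ} {u : E → E} (hu : ContDiff ℝ 1 u)
    (hu₀ : ∀ x ∈ sphere (0 : E) R, u x = 0) :
    ∫ x in closedBall 0 R, (1 + fderiv ℝ u x).det ∂μ = μ.real (closedBall 0 R) := by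
  have Du_cont : Continuous (fderiv ℝ u) := hu.continuous_fderiv one_ne_zero
  let F (t : ℝ) (x : E) : ℝ := (1 + t • fderiv ℝ u x).det
  have F_integrable (t : ℝ) : IntegrableOn (F t) (closedBall 0 R) μ := by
    refine ContinuousOn.integrableOn_compact (isCompact_closedBall 0 R) (Continuous.continuousOn ?_)
    exact ContinuousLinearMap.continuous_det.comp (by fun_prop)
  obtain ⟨C, hC⟩ := (isCompact_closedBall (0 : E) R).exists_bound_of_continuousOn
    Du_cont.continuousOn
  have small : ∀ᶠ t : ℝ in 𝓝 0, ∫ x in closedBall 0 R, F t x ∂μ = μ.real (closedBall 0 R) := by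
    have : ∀ᶠ t : ℝ in 𝓝 0, ‖t‖₊ * C.toNNReal < 1 :=
      (Continuous.tendsto' (by fun_prop) (0 : ℝ) 0 (by simp)).eventually_lt_const one_pos
    filter_upwards [this] with t ht
    have deriv_smul (x : E) : fderiv ℝ (t • u) x = t • fderiv ℝ u x :=
      fderiv_const_smul (hu.differentiable one_ne_zero x) t
    simp only [F, ← deriv_smul]
    refine integral_det_one_add_fderiv_of_norm_le μ (hu.const_smul t)
      (fun x hx => by simp [hu₀ x hx]) ht fun x hx => ?_
    rw [deriv_smul, nnnorm_smul]
    gcongr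
    exact NNReal.le_toNNReal_of_coe_le (hC x hx)
  obtain ⟨s, hs, hcard⟩ :=
    (infinite_of_mem_nhds 0 small).exists_subset_card_eq (finrank ℝ E + 1)
  have interpolate (x : E) : (1 + fderiv ℝ u x).det =
      ∑ t ∈ s, F t x * (Lagrange.basis s id t).eval 1 :=
    det_one_add_eq_sum (fderiv ℝ u x : E →ₗ[ℝ] E) s (by omega)
  calc ∫ x in closedBall 0 R, (1 + fderiv ℝ u x).det ∂μ
      = ∑ t ∈ s, ∫ x in closedBall 0 R, F t x * (Lagrange.basis s id t).eval 1 ∂μ := by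
        simp only [interpolate]
        exact integral_finsetSum _ fun t _ => (F_integrable t).mul_const _
    _ = ∑ t ∈ s, μ.real (closedBall 0 R) * (Lagrange.basis s id t).eval 1 :=
        Finset.sum_congr rfl fun t ht => by rw [integral_mul_const, hs ht]
    _ = μ.real (closedBall 0 R) := by
        rw [← Finset.mul_sum, ← Polynomial.eval_finsetSum,
          Lagrange.sum_basis (injOn_id _) (Finset.card_pos.1 (by omega)), Polynomial.eval_one,
          mul_one]

end Degree

section Zeros

lemma det_eq_zero_of_hasFDerivAt_of_norm_eq {E : Type*} [NormedAddCommGroup E]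
    [InnerProductSpace ℝ E] [FiniteDimensional ℝ E] {s : E → E} {s' : E →L[ℝ] E} {x : E} {R : ℝ}
    (hR : 0 < R) (hs : HasFDerivAt s s' x) (norm_s : ∀ y, ‖s y‖ = R) : s'.det = 0 := by
  have orthogonal (w : E) : inner ℝ (s x) (s' w) = 0 := by
    have const : HasFDerivAt (fun y => ‖s y‖ ^ 2) (0 : E →L[ℝ] ℝ) x := by
      simp only [norm_s, hasFDerivAt_const]
    simpa using DFunLike.congr_fun (hs.norm_sq.unique const) w
  by_contra hdet
  obtain ⟨w, hw⟩ := (LinearMap.equivOfDetNeZero (s' : E →ₗ[ℝ] E) hdet).surjective (s x)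
  have s_zero : s x = 0 :=
    inner_self_eq_zero.1 ((congrArg (inner ℝ (s x)) hw).symm.trans (orthogonal w))
  exact hR.ne' (by rw [← norm_s x, s_zero, norm_zero])

lemma not_contDiff_retraction_sphere {E : Type*} [NormedAddCommGroup E] [InnerProductSpace ℝ E]
    [FiniteDimensional ℝ E] {R : ℝ} (hR : 0 < R) {s : E → E} (hs : ContDiff ℝ 1 s)
    (norm_s : ∀ x, ‖s x‖ = R) : ¬ ∀ x ∈ sphere (0 : E) R, s x = x := by
  intro fix
  borelize E
  let μ : Measure E := Measure.addHaar
  have det_zero (x : E) : (1 + fderiv ℝ (fun x => s x - x) x).det = 0 := by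
    have s_deriv := (hs.differentiable one_ne_zero x).hasFDerivAt
    have u_deriv : fderiv ℝ (fun x => s x - x) x = fderiv ℝ s x - 1 :=
      (s_deriv.fun_sub (hasFDerivAt_id x)).fderiv
    rw [u_deriv, add_sub_cancel]
    exact det_eq_zero_of_hasFDerivAt_of_norm_eq hR s_deriv norm_s
  have measure_zero : 0 = μ.real (closedBall 0 R) := by
    rw [← integral_det_one_add_fderiv μ (u := fun x => s x - x) (hs.sub contDiff_id)
      fun x hx => sub_eq_zero.2 (fix x hx)]
    simp only [det_zero, integral_zero]
  exact measure_zero.not_lt <| ENNReal.toReal_pos (measure_closedBall_pos μ 0 hR).ne'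
    measure_closedBall_lt_top.ne

lemma exists_eq_zero_of_eventuallyEq_id_of_inner {E : Type*} [NormedAddCommGroup E]
    [InnerProductSpace ℝ E] [FiniteDimensional ℝ E] {J : E → E} (hJ : Continuous J)
    (hJid : J =ᶠ[cocompact E] id) : ∃ x, J x = 0 := by
  by_contra! J_ne
  obtain ⟨R, hR⟩ := closedBall_compl_subset_of_mem_cocompact hJid 0
  have J_far {x : E} (hx : R < ‖x‖) : J x = x := hR (by simpa using hx)
  obtain ⟨g, g_smooth, g_close, g_far, -⟩ := hJ.exists_contDiff_approx_and_eqOn 1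
    (ε := fun x => ‖J x‖) hJ.norm (fun x => norm_pos_iff.2 (J_ne x))
    (S := {x | |R| + 1 ≤ ‖x‖}) (U := {x | R < ‖x‖})
    (isClosed_le continuous_const continuous_norm)
    ((isOpen_lt continuous_const continuous_norm).mem_nhdsSet.2 fun x (hx : |R| + 1 ≤ ‖x‖) =>
      (le_abs_self R).trans_lt ((lt_add_one _).trans_le hx))
    (contDiff_id.contDiffOn.congr fun x hx => J_far hx)
  have g_ne (x : E) : g x ≠ 0 := fun hx => by simpa [hx] using g_close x
  have radius_pos : 0 < |R| + 1 := by positivity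
  refine not_contDiff_retraction_sphere radius_pos
    (s := fun x => (|R| + 1) • NormedSpace.normalize (g x)) ?_ (fun x => ?_) fun x hx => ?_
  · exact contDiff_const.smul
      (((g_smooth.norm ℝ g_ne).inv fun x => norm_ne_zero_iff.2 (g_ne x)).smul g_smooth)
  · rw [norm_smul, NormedSpace.norm_normalize_eq_one_iff.2 (g_ne x), mul_one,
      Real.norm_of_nonneg radius_pos.le]
  · rw [mem_sphere_zero_iff_norm] at hx
    have : g x = x := (g_far hx.ge).trans (J_far (by linarith [le_abs_self R]))
    rw [this, ← hx, NormedSpace.norm_smul_normalize]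

variable {E : Type*} [NormedAddCommGroup E] [NormedSpace ℝ E] [FiniteDimensional ℝ E]

lemma exists_eq_zero_of_eventuallyEq_id {J : E → E} (hJ : Continuous J)
    (hJid : J =ᶠ[cocompact E] id) : ∃ x, J x = 0 := by
  let T : E ≃L[ℝ] EuclideanSpace ℝ (Fin (finrank ℝ E)) := toEuclidean
  obtain ⟨x, hx⟩ := exists_eq_zero_of_eventuallyEq_id_of_inner (J := fun x => T (J (T.symm x)))
    (by fun_prop) <| by
      filter_upwards [T.symm.toHomeomorph.isClosedEmbedding.tendsto_cocompact.eventually hJid]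
        with x hx
      simpa using congrArg T hx
  exact ⟨T.symm x, by simpa using hx⟩

lemma exists_eq_zero_of_zero_notMem_segment {J : E → E} (hJ : Continuous J) {R : ℝ}
    (hseg : ∀ x, R ≤ ‖x‖ → 0 ∉ segment ℝ x (J x)) : ∃ x, J x = 0 := by
  let c (x : E) : ℝ := max 0 (min 1 (R + 1 - ‖x‖))
  have c_mem (x : E) : c x ∈ Icc (0 : ℝ) 1 :=
    ⟨le_max_left _ _, max_le zero_le_one (min_le_left _ _)⟩
  have cut_id : (fun x => AffineMap.lineMap x (J x) (c x)) =ᶠ[cocompact E] id := by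
    filter_upwards [(isCompact_closedBall (0 : E) (R + 1)).compl_mem_cocompact] with x hx
    have : R + 1 < ‖x‖ := by simpa using hx
    have hc : c x = 0 := max_eq_left ((min_le_right _ _).trans (by linarith))
    simp [hc]
  obtain ⟨x, hx⟩ := exists_eq_zero_of_eventuallyEq_id
    (hJ := by simp only [AffineMap.lineMap_apply_module]; fun_prop) cut_id
  by_cases hxR : R ≤ ‖x‖
  · have : AffineMap.lineMap x (J x) (c x) ∈ segment ℝ x (J x) := by
      rw [segment_eq_image_lineMap]
      exact mem_image_of_mem _ (c_mem x)
    exact absurd (hx ▸ this) (hseg x hxR)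
  · have hc : c x = 1 := by
      simp only [c, min_eq_left (show 1 ≤ R + 1 - ‖x‖ by linarith), zero_le_one, max_eq_right]
    exact ⟨x, by simpa [hc] using hx⟩

end Zeros

section Linking

/-- Collapses the complement of the unit ball of `E` to the point `(0, 1)` and wraps the ball around
the origin of `E × ℝ`, the point `0` going to `(0, -1)`: the Pontryagin collapse of the ball to a
sphere, up to homotopy. -/
noncomputable def collapse {E : Type*} [NormedAddCommGroup E] [NormedSpace ℝ E] (w : E) : E × ℝ :=
  (max 0 (1 - ‖w‖) • w, min (2 * ‖w‖ - 1) 1)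

variable {A B E : Type*} [NormedAddCommGroup A] [NormedAddCommGroup B] [NormedSpace ℝ B]
  [NormedAddCommGroup E] [NormedSpace ℝ E]

lemma continuous_collapse : Continuous (collapse : E → E × ℝ) := by
  unfold collapse
  fun_prop

lemma collapse_of_one_le_norm {w : E} (hw : 1 ≤ ‖w‖) : collapse w = (0, 1) := by
  rw [collapse, max_eq_left (by linarith), min_eq_right (by linarith), zero_smul]

lemma collapse_ne_zero (w : E) : collapse w ≠ 0 := by
  by_cases hw : 1 ≤ ‖w‖
  · simp [collapse_of_one_le_norm hw]
  · intro h
    obtain ⟨h₁, h₂⟩ := Prod.mk_eq_zero.1 h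
    rw [max_eq_right (by linarith), smul_eq_zero, or_iff_right (by linarith)] at h₁
    norm_num [h₁] at h₂

lemma exists_continuous_ne_zero_eq_collapse {X : Type*} [TopologicalSpace X] {N : Set X}
    (hN : IsClosed N) {θ : X → E} (hθ : ContinuousOn θ N) {d : ℝ} (hd : 0 < d)
    (hfr : ∀ x ∈ frontier N, d ≤ ‖θ x‖) :
    ∃ J : X → E × ℝ, Continuous J ∧ (∀ x, J x ≠ 0) ∧
      (∀ x ∈ N, J x = collapse (d⁻¹ • θ x)) ∧ ∀ x ∉ N, J x = (0, 1) := by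
  classical
  refine ⟨N.piecewise (fun x => collapse (d⁻¹ • θ x)) fun _ => (0, 1), ?_, fun x => ?_,
    fun _ => piecewise_eq_of_mem _ _ _, fun _ => piecewise_eq_of_notMem _ _ _⟩
  · refine continuous_piecewise (fun x hx => collapse_of_one_le_norm ?_) ?_ continuousOn_const
    · rw [norm_smul, norm_inv, Real.norm_of_nonneg hd.le]
      exact (one_le_inv_mul₀ hd).2 (hfr x hx)
    · rw [hN.closure_eq]
      exact continuous_collapse.comp_continuousOn (hθ.const_smul d⁻¹)
  · by_cases hx : x ∈ N
    · rw [piecewise_eq_of_mem _ _ _ hx]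
      exact collapse_ne_zero _
    · simp [piecewise_eq_of_notMem _ _ _ hx]

/- Were `θ` large on the frontier, `collapse` would turn it into a nowhere vanishing map of `E × ℝ`
that far away never points opposite to the position vector. -/
lemma exists_mem_frontier_norm_lt [FiniteDimensional ℝ E] {N : Set (E × ℝ)} (hN : IsClosed N)
    {θ : E × ℝ → E} (hθ : ContinuousOn θ N) {r : ℝ} (hNr : ∀ x ∈ N, ‖x.1‖ < r)
    (hN_top : ∀ x ∈ N, x.2 < 1) (hN_axis : ∀ t ≤ 0, ((0 : E), t) ∈ N) {c : ℝ} (hc : 0 < c)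
    (hθ_bot : ∀ x ∈ N, x.2 ≤ 0 → θ x = c • x.1) {d : ℝ} (hd : 0 < d) :
    ∃ x ∈ frontier N, ‖θ x‖ < d := by
  by_contra! hfr
  obtain ⟨J, J_cont, J_ne, J_in, J_out⟩ := exists_continuous_ne_zero_eq_collapse hN hθ hd hfr
  refine (exists_eq_zero_of_zero_notMem_segment J_cont (R := max r 1) ?_).elim J_ne
  rintro ⟨y, t⟩ hR ⟨a, b, ha, hb, hab, hzero⟩
  have ha : 0 < a := ha.lt_of_ne <| by
    rintro rfl
    rw [zero_add] at hab
    exact J_ne (y, t) (by simpa [hab] using hzero)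
  have y_eq : a • y + b • (J (y, t)).1 = 0 := congrArg Prod.fst hzero
  have t_eq : a * t + b * (J (y, t)).2 = 0 := congrArg Prod.snd hzero
  by_cases hx : (y, t) ∈ N
  · have ht : t ≤ -1 := by
      have ht : max r 1 ≤ |t| := (le_max_iff.1 hR).resolve_left
        (not_le.2 ((hNr _ hx).trans_le (le_max_left _ _)))
      exact le_neg_of_le_neg ((le_abs.1 ((le_max_right _ _).trans ht)).resolve_left
        (not_le.2 (hN_top _ hx)))
    rw [J_in _ hx, hθ_bot _ hx (by linarith)] at y_eq t_eq
    have hy : y = 0 := by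
      rw [collapse, smul_smul, smul_smul, smul_smul, ← add_smul] at y_eq
      exact (smul_eq_zero.1 y_eq).resolve_left (by positivity)
    simp only [collapse, hy, smul_zero, norm_zero, sub_zero, mul_zero, zero_sub, mul_neg, mul_one,
      min_eq_left (show (-1 : ℝ) ≤ 1 by norm_num)] at t_eq
    nlinarith
  · rw [J_out _ hx] at y_eq t_eq
    have hy : y = 0 := by simpa [ha.ne'] using y_eq
    exact hx (hy ▸ hN_axis t (by nlinarith))

lemma dist_smul_normalize_self {x : B} (hx : x ≠ 0) (ρ : ℝ) :
    dist (ρ • NormedSpace.normalize x) x = |ρ - ‖x‖| :=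
  calc dist (ρ • NormedSpace.normalize x) x
      = ‖(ρ - ‖x‖) • NormedSpace.normalize x‖ := by
        rw [dist_eq_norm, sub_smul, NormedSpace.norm_smul_normalize]
    _ = |ρ - ‖x‖| := by
        rw [norm_smul, NormedSpace.norm_normalize_eq_one_iff.2 hx, mul_one, Real.norm_eq_abs]

variable [FiniteDimensional ℝ B] [FiniteDimensional ℝ E]

lemma exists_continuous_forall_ne_zero_dist_lt (hdim : finrank ℝ E < finrank ℝ B) {β : E → B}
    (hβ : Continuous β) {ε : ℝ} (hε : 0 < ε) :
    ∃ g : E → B, Continuous g ∧ (∀ y, g y ≠ 0) ∧ ∀ y, dist (g y) (β y) < ε := by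
  obtain ⟨g, g_smooth, g_close, -⟩ := hβ.exists_contDiff_approx 1 (ε := fun _ => ε / 2)
    continuous_const fun _ => by positivity
  obtain ⟨v, v_notMem, v_small⟩ := (ContDiff.dense_compl_range_of_finrank_lt_finrank
    g_smooth hdim).exists_mem_open (isOpen_ball (x := (0 : B)) (ε := ε / 2))
      ⟨0, by simpa using hε⟩
  refine ⟨fun y => g y - v, g_smooth.continuous.sub continuous_const,
    fun y h => v_notMem ⟨y, sub_eq_zero.1 h⟩, fun y => ?_⟩
  calc dist (g y - v) (β y) ≤ dist (g y - v) (g y) + dist (g y) (β y) := dist_triangle _ _ _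
    _ < ε / 2 + ε / 2 := add_lt_add (by simpa [dist_eq_norm] using v_small) (g_close y)
    _ = ε := add_halves ε

lemma exists_continuous_norm_eq_dist_le (hdim : finrank ℝ E < finrank ℝ B) {β : E → B}
    (hβ : Continuous β) {ρ : ℝ} (hρ : 0 < ρ) :
    ∃ g : E → B, Continuous g ∧ (∀ y, ‖g y‖ = ρ) ∧
      ∀ y, ‖β y‖ = ρ → dist (g y) (β y) ≤ ρ / 2 := by
  obtain ⟨g, g_cont, g_ne, g_close⟩ :=
    exists_continuous_forall_ne_zero_dist_lt hdim hβ (ε := ρ / 4) (by positivity)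
  refine ⟨fun y => ρ • NormedSpace.normalize (g y), ?_, fun y => ?_, fun y hy => ?_⟩
  · exact ((g_cont.norm.inv₀ fun y => norm_ne_zero_iff.2 (g_ne y)).smul g_cont).const_smul ρ
  · rw [norm_smul, NormedSpace.norm_normalize_eq_one_iff.2 (g_ne y), mul_one,
      Real.norm_of_nonneg hρ.le]
  · have : |ρ - ‖g y‖| ≤ dist (g y) (β y) := by
      rw [← hy, dist_comm, dist_eq_norm]
      exact abs_norm_sub_norm_le _ _
    have := dist_triangle (ρ • NormedSpace.normalize (g y)) (g y) (β y)
    rw [dist_smul_normalize_self (g_ne y)] at this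
    linarith [g_close y]

lemma exists_continuous_homotopy_norm_eq (hdim : finrank ℝ E < finrank ℝ B) {K : Set E}
    (hK : IsClosed K) {β : E → B} (hβ : ContinuousOn β K) {ρ : ℝ} (hρ : 0 < ρ)
    (hβρ : ∀ y ∈ K, ‖β y‖ ≤ ρ) :
    ∃ b : E × ℝ → B, Continuous b ∧ (∀ y ∈ K, ∀ t ≤ 0, b (y, t) = β y) ∧
      (∀ y ∈ K, ∀ t, ‖b (y, t)‖ ≤ ρ) ∧ (∀ y, ∀ t, 1 ≤ t → ‖b (y, t)‖ = ρ) ∧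
      ∀ y ∈ K, ‖β y‖ = ρ → ∀ t, ρ / 2 ≤ ‖b (y, t)‖ := by
  obtain ⟨β', hβ'⟩ := ContinuousMap.exists_restrict_eq hK
    (⟨K.domRestrict β, continuousOn_iff_continuous_domRestrict.1 hβ⟩ : C(K, B))
  have β'_eq {y : E} (hy : y ∈ K) : β' y = β y := DFunLike.congr_fun hβ' (⟨y, hy⟩ : K)
  obtain ⟨g, g_cont, g_norm, g_close⟩ := exists_continuous_norm_eq_dist_le hdim β'.continuous hρ
  let τ (t : ℝ) : ℝ := max 0 (min 1 t)
  have τ_mem (t : ℝ) : τ t ∈ Icc (0 : ℝ) 1 :=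
    ⟨le_max_left _ _, max_le zero_le_one (min_le_left _ _)⟩
  have β'_cont := β'.continuous
  refine ⟨fun x => AffineMap.lineMap (β' x.1) (g x.1) (τ x.2), ?_, fun y hy t ht => ?_,
    fun y hy t => ?_, fun y t ht => ?_, fun y hy hyρ t => ?_⟩
  · simp only [AffineMap.lineMap_apply_module]
    fun_prop
  · have : τ t = 0 := max_eq_left ((min_le_right _ _).trans ht)
    simp [this, β'_eq hy]
  · rw [← mem_closedBall_zero_iff]
    exact (convex_closedBall 0 ρ).lineMap_mem (by simpa [β'_eq hy] using hβρ y hy)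
      (by simp [g_norm]) (τ_mem t)
  · have : τ t = 1 := by simp [τ, ht]
    simp [this, g_norm]
  · rw [← β'_eq hy] at hyρ
    have near : dist (AffineMap.lineMap (β' y) (g y) (τ t)) (β' y) ≤ ρ / 2 := by
      rw [dist_lineMap_left, Real.norm_of_nonneg (τ_mem t).1, dist_comm]
      exact (mul_le_of_le_one_left dist_nonneg (τ_mem t).2).trans
        (g_close y hyρ)
    have := (abs_norm_sub_norm_le _ _).trans ((dist_eq_norm _ _).symm.trans_le near)
    linarith [(abs_le.1 this).1]

lemma frontier_inter_preimage_subset {X Y : Type*} [TopologicalSpace X] [TopologicalSpace Y]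
    {K : Set X} (hK : IsClosed K) {g : X → Y} (hg : ContinuousOn g K) {L : Set Y}
    (hL : IsClosed L) : frontier (K ∩ g ⁻¹' L) ⊆ frontier K ∪ g ⁻¹' frontier L := by
  intro x hx
  have hxN := (hg.preimage_isClosed_of_isClosed hK hL).frontier_subset hx
  by_contra! h
  obtain ⟨hxK, hxL⟩ := not_or.1 h
  have nhds_K : K ∈ 𝓝 x := by
    by_contra hxint
    exact hxK ⟨subset_closure hxN.1, fun h => hxint (mem_interior_iff_mem_nhds.1 h)⟩
  have nhds_L : L ∈ 𝓝 (g x) := by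
    by_contra hxint
    exact hxL ⟨subset_closure hxN.2, fun h => hxint (mem_interior_iff_mem_nhds.1 h)⟩
  exact hx.2 <| mem_interior_iff_mem_nhds.2 <|
    inter_mem nhds_K ((hg.continuousAt nhds_K).preimage_mem_nhds nhds_L)

lemma finrank_le_of_isolatingBlock {K : Set E} (hK : IsCompact K) {e : E → A × B}
    (he : ContinuousOn e K) {ρ : ℝ} (hρ : 0 < ρ) (heρ : ∀ y ∈ K, ‖e y‖ ≤ ρ)
    (he_fr : ∀ y ∈ frontier K, ‖(e y).2‖ = ρ) {L : Set (A × B)} (hL : IsClosed L)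
    (hLρ : ∀ x ∈ L, ‖x.2‖ < ρ / 2) {Θ : A × B → E} (hΘ : ContinuousOn Θ L) {d : ℝ} (hd : 0 < d)
    (hΘ_fr : ∀ x ∈ frontier L, ‖x‖ ≤ ρ → d ≤ ‖Θ x‖) {c : ℝ} (hc : 0 < c)
    (hΘe : ∀ y ∈ K, e y ∈ L → Θ (e y) = c • y) (h0 : 0 ∈ K) (he0 : e 0 ∈ L) :
    finrank ℝ B ≤ finrank ℝ E := by
  by_contra! hdim
  have norm_e {y : E} (hy : y ∈ K) : ‖(e y).1‖ ≤ ρ ∧ ‖(e y).2‖ ≤ ρ := by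
    simpa [Prod.norm_def] using heρ y hy
  obtain ⟨b, b_cont, b_bot, b_le, b_top, b_fr⟩ := exists_continuous_homotopy_norm_eq hdim
    hK.isClosed he.snd hρ fun y hy => (norm_e hy).2
  let Φ (x : E × ℝ) : A × B := ((e x.1).1, b x)
  have Φ_cont : ContinuousOn Φ (K ×ˢ univ) :=
    (he.fst.comp continuousOn_fst fun x hx => hx.1).prodMk b_cont.continuousOn
  have Φ_bot {y : E} {t : ℝ} (hy : y ∈ K) (ht : t ≤ 0) : Φ (y, t) = e y :=
    Prod.ext rfl (b_bot y hy t ht)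
  let N : Set (E × ℝ) := (K ×ˢ univ) ∩ Φ ⁻¹' L
  have N_closed : IsClosed N :=
    Φ_cont.preimage_isClosed_of_isClosed (hK.isClosed.prod isClosed_univ) hL
  have Φ_frontier {x : E × ℝ} (hx : x ∈ frontier N) : Φ x ∈ frontier L := by
    have hxN : x ∈ N := N_closed.frontier_subset hx
    refine (frontier_inter_preimage_subset (hK.isClosed.prod isClosed_univ) Φ_cont hL
      hx).resolve_left fun hxK => ?_
    rw [frontier_prod_univ_eq] at hxK
    exact (b_fr x.1 hxN.1.1 (he_fr _ hxK.1) x.2).not_gt (hLρ _ hxN.2)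
  obtain ⟨r, hr⟩ := hK.isBounded.subset_ball 0
  obtain ⟨x, x_frontier, hx⟩ := exists_mem_frontier_norm_lt N_closed (θ := Θ ∘ Φ)
    (hΘ.comp (Φ_cont.mono inter_subset_left) fun x hx => hx.2)
    (fun x hx => mem_ball_zero_iff.1 (hr hx.1.1))
    (fun x hx => by
      by_contra! ht
      have := hLρ _ hx.2
      rw [show (Φ x).2 = b (x.1, x.2) from rfl, b_top _ _ ht] at this
      linarith)
    (fun t ht => ⟨⟨h0, mem_univ _⟩, by rwa [mem_preimage, Φ_bot h0 ht]⟩) hc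
    (fun ⟨y, t⟩ hx ht => by
      have hΦ := Φ_bot hx.1.1 ht
      rw [Function.comp_apply, hΦ, hΘe y hx.1.1 (hΦ ▸ hx.2)]) hd
  have hxK : x.1 ∈ K := (N_closed.frontier_subset x_frontier).1.1
  exact (hΘ_fr _ (Φ_frontier x_frontier)
    (max_le (norm_e hxK).1 (b_le _ hxK _))).not_gt hx

variable [LocallyCompactSpace A]

/- Here `e '' K` is a disc through `e 0 ∈ C` whose boundary is linked with `C = Θ ⁻¹' {0}`. -/
lemma finrank_le_of_linking {K : Set E} (hK : IsCompact K) {e : E → A × B}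
    (he : ContinuousOn e K) {ρ : ℝ} (hρ : 0 < ρ) (heρ : ∀ y ∈ K, ‖e y‖ ≤ ρ)
    (he_fr : ∀ y ∈ frontier K, ‖(e y).2‖ = ρ) {C : Set (A × B)} (hC : IsCompact C)
    (hCρ : ∀ x ∈ C, ‖x.2‖ < ρ / 2) {Θ : A × B → E} (hΘ : ∀ᶠ x in 𝓝ˢ C, ContinuousAt Θ x)
    (hΘC : ∀ᶠ x in 𝓝ˢ C, ‖x‖ ≤ ρ → Θ x = 0 → x ∈ C) {c : ℝ} (hc : 0 < c)
    (hΘe : ∀ᶠ y in 𝓝 0, Θ (e y) = c • y) (heC : ∀ y ∈ K, e y ∈ C → y = 0)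
    (h0 : 0 ∈ K) (he0 : e 0 ∈ C) :
    finrank ℝ B ≤ finrank ℝ E := by
  obtain ⟨W, hW, W_open, W_zero⟩ := _root_.eventually_nhds_iff.1 hΘe
  have far_compact : IsCompact (e '' (K \ W)) :=
    (hK.diff W_open).image_of_continuousOn (he.mono sdiff_subset)
  have far : ∀ᶠ x in 𝓝ˢ C, x ∉ e '' (K \ W) := by
    refine far_compact.isClosed.isOpen_compl.mem_nhdsSet.2 fun x hx => ?_
    rintro ⟨y, ⟨hy, hyW⟩, rfl⟩
    exact hyW (heC y hy hx ▸ W_zero)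
  have thin : ∀ᶠ x : A × B in 𝓝ˢ C, ‖x.2‖ < ρ / 2 :=
    (isOpen_lt continuous_snd.norm continuous_const).mem_nhdsSet.2 hCρ
  obtain ⟨L, ⟨hCL, hL⟩, hLsub⟩ := hC.nhdsSet_basis_isCompact.eventually_iff.1
    ((hΘ.and hΘC).and (far.and thin))
  have frontier_compact : IsCompact (frontier L ∩ closedBall 0 ρ) :=
    (hL.of_isClosed_subset isClosed_frontier hL.isClosed.frontier_subset).inter_right
      isClosed_closedBall
  have Θ_cont : ContinuousOn Θ L := fun x hx => (hLsub hx).1.1.continuousWithinAt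
  obtain ⟨d, hd, hd_le⟩ := frontier_compact.exists_forall_le' (f := fun x => ‖Θ x‖) (a := 0)
    (Θ_cont.mono (inter_subset_left.trans hL.isClosed.frontier_subset)).norm <| by
      rintro x ⟨hx, hxρ⟩
      refine norm_pos_iff.2 fun hΘx => hx.2 (subset_interior_iff_mem_nhdsSet.2 hCL ?_)
      exact (hLsub (hL.isClosed.frontier_subset hx)).1.2 (mem_closedBall_zero_iff.1 hxρ) hΘx
  refine finrank_le_of_isolatingBlock hK he hρ heρ he_fr hL.isClosed (fun x hx => (hLsub hx).2.2)
    Θ_cont hd (fun x hx hxρ => hd_le x ⟨hx, mem_closedBall_zero_iff.2 hxρ⟩) hc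
    (fun y hy hyL => hW y ?_) h0 (subset_of_mem_nhdsSet hCL he0)
  by_contra hyW
  exact (hLsub hyL).2.1 ⟨y, ⟨hy, hyW⟩, rfl⟩

end Linking

section LocalStableSets

open scoped Uniformity

variable {f : M ≃ₜ M} {α ε η : ℝ} {x y : M}

lemma toEquiv_zpow (f : M ≃ₜ M) (k : ℤ) : (f ^ k).toEquiv = f.toEquiv ^ k :=
  map_zpow (MonoidHom.mk' Homeomorph.toEquiv fun _ _ => rfl : (M ≃ₜ M) →* Equiv.Perm M) f k

lemma iterZ_eq_zpow_apply (f : M ≃ₜ M) (k : ℤ) (x : M) : iterZ f k x = (f ^ k) x := by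
  rw [iterZ, ← toEquiv_zpow]
  rfl

lemma mem_WsLoc_iff : y ∈ WsLoc f ε x ↔ ∀ i : ℕ, dist ((f ^ i) x) ((f ^ i) y) ≤ ε := by
  simp only [WsLoc, mem_ofPred_eq, iterZ_eq_zpow_apply]
  refine ⟨fun h i => by simpa using h i i.cast_nonneg, fun h k hk => ?_⟩
  lift k to ℕ using hk
  simpa using h k

lemma self_mem_WsLoc (hε : 0 ≤ ε) : x ∈ WsLoc f ε x :=
  mem_WsLoc_iff.2 fun i => by rwa [dist_self]

lemma WsLoc_mono (h : ε ≤ η) : WsLoc f ε x ⊆ WsLoc f η x :=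
  fun _ hy k hk => (hy k hk).trans h

lemma isClosed_setOf_mem_WsLoc (f : M ≃ₜ M) (ε : ℝ) :
    IsClosed {u : M × M | u.2 ∈ WsLoc f ε u.1} := by
  simp only [mem_WsLoc_iff, ofPred_forall]
  exact isClosed_iInter fun i => isClosed_le
    (((f ^ i).continuous.comp continuous_fst).dist ((f ^ i).continuous.comp continuous_snd))
    continuous_const

lemma isClosed_WsLoc (f : M ≃ₜ M) (ε : ℝ) (x : M) : IsClosed (WsLoc f ε x) :=
  (isClosed_setOf_mem_WsLoc f ε).preimage (Continuous.prodMk_right x)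

lemma IsExpansive.inv (hf : IsExpansive f α) : IsExpansive f⁻¹ α := fun x y hxy => by
  obtain ⟨k, hk⟩ := hf x y hxy
  exact ⟨-k, by simpa only [iterZ_eq_zpow_apply, zpow_neg, inv_zpow, inv_inv] using hk⟩

lemma IsExpansive.eq_of_mem_WsLoc (hf : IsExpansive f α) (hs : y ∈ WsLoc f α x)
    (hu : y ∈ WsLoc f⁻¹ α x) : x = y := by
  by_contra hxy
  obtain ⟨k, hk⟩ := hf x y hxy
  rw [iterZ_eq_zpow_apply, iterZ_eq_zpow_apply] at hk
  obtain ⟨i, rfl | rfl⟩ := k.eq_nat_or_neg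
  · exact hk.not_ge (by simpa using mem_WsLoc_iff.1 hs i)
  · exact hk.not_ge (by simpa using mem_WsLoc_iff.1 hu i)

lemma apply_pow_mem_WsLoc (hy : y ∈ WsLoc f ε x) (i : ℕ) : (f ^ i) y ∈ WsLoc f ε ((f ^ i) x) :=
  mem_WsLoc_iff.2 fun j => by
    simpa only [← Homeomorph.mul_apply, ← pow_add] using mem_WsLoc_iff.1 hy (j + i)

variable [CompactSpace M]

/- A pair of points that is the image under every `f ^ N` of a pair with `α`-close forward orbits
has `α`-close full orbits, so it lies on the diagonal; compactness makes this uniform. -/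
lemma IsExpansive.exists_forall_dist_pow_lt (hf : IsExpansive f α) (hη : 0 < η) :
    ∃ N : ℕ, ∀ x, ∀ y ∈ WsLoc f α x, ∀ i ≥ N, dist ((f ^ i) x) ((f ^ i) y) < η := by
  let D : Set (M × M) := {u | u.2 ∈ WsLoc f α u.1}
  let T (N : ℕ) : Set (M × M) := Prod.map (f ^ N) (f ^ N) '' D
  have T_compact (N : ℕ) : IsCompact (T N) := (isClosed_setOf_mem_WsLoc f α).isCompact.image
    ((f ^ N).continuous.prodMap (f ^ N).continuous)
  have T_antitone : Antitone T := antitone_nat_of_succ_le fun N => by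
    rintro _ ⟨u, hu, rfl⟩
    exact ⟨Prod.map f f u, apply_pow_mem_WsLoc hu 1, rfl⟩
  have T_iInter : ∀ u ∈ ⋂ N, T N, u.1 = u.2 := fun u hu => by
    rw [mem_iInter] at hu
    refine hf.eq_of_mem_WsLoc ?_ (mem_WsLoc_iff.2 fun N => ?_)
    · obtain ⟨v, hv, rfl⟩ := hu 0
      exact hv
    · obtain ⟨v, hv, rfl⟩ := hu N
      simpa [← Homeomorph.mul_apply] using mem_WsLoc_iff.1 hv 0
  have dist_lt_open : IsOpen {u : M × M | dist u.1 u.2 < η} :=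
    isOpen_lt continuous_dist continuous_const
  obtain ⟨N, hN⟩ := exists_subset_nhds_of_isCompact T_antitone.directed_ge T_compact
    fun u hu => dist_lt_open.mem_nhds (by simpa [T_iInter u hu] using hη)
  exact ⟨N, fun x y hy i hi => hN (T_antitone hi ⟨(x, y), hy, rfl⟩)⟩

lemma IsExpansive.eventually_mem_WsLoc (hf : IsExpansive f α) (hη : 0 < η) :
    ∀ᶠ u : M × M in 𝓤 M, u.2 ∈ WsLoc f α u.1 → u.2 ∈ WsLoc f η u.1 := by
  obtain ⟨N, hN⟩ := hf.exists_forall_dist_pow_lt hη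
  have initial : ∀ᶠ u : M × M in 𝓤 M, ∀ i ∈ Finset.range N,
      dist ((f ^ i) u.1) ((f ^ i) u.2) < η :=
    (eventually_all_finset _).2 fun i _ =>
      CompactSpace.uniformContinuous_of_continuous (f ^ i).continuous (dist_mem_uniformity hη)
  filter_upwards [initial] with u hu hs
  refine mem_WsLoc_iff.2 fun i => ?_
  rcases lt_or_ge i N with hi | hi
  · exact (hu i (Finset.mem_range.2 hi)).le
  · exact (hN _ _ hs i hi).le

lemma eventually_WsLoc_subset {U : Set M} (hU : IsOpen U) (h : WsLoc f ε x ⊆ U) :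
    ∀ᶠ q in 𝓝 x, WsLoc f ε q ⊆ U := by
  have : ∀ᶠ q in 𝓝 x, ∀ z ∈ Uᶜ, z ∉ WsLoc f ε q :=
    hU.isClosed_compl.isCompact.eventually_forall_of_forall_eventually fun z hz =>
      (isClosed_setOf_mem_WsLoc f ε).isOpen_compl.mem_nhds fun hxz => hz (h hxz)
  filter_upwards [this] with q hq z hz
  exact not_not.1 fun hzU => hq z hzU hz

end LocalStableSets

section StraightenedStableSets

variable {A B : Type*} [NormedAddCommGroup A] [NormedAddCommGroup B] {f : M ≃ₜ M} {α : ℝ} {q : M}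

/-- The chart `χ` is defined on the whole `α`-local stable set of `q`, and maps it into the
horizontal slice `b = 0`; near the points of the `α / 2`-local stable set, the slice is contained in
the `α`-local stable set. -/
structure StraightensWsLoc (f : M ≃ₜ M) (α : ℝ) (q : M) (χ : OpenPartialHomeomorph M (A × B)) :
    Prop where
  subset_source : WsLoc f α q ⊆ χ.source
  snd_eq_zero : ∀ x ∈ WsLoc f α q, (χ x).2 = 0
  eventually_mem : ∀ x ∈ WsLoc f (α / 2) q, ∀ᶠ z in 𝓝 x, (χ z).2 = 0 → z ∈ WsLoc f α q

namespace StraightensWsLoc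

variable {χ : OpenPartialHomeomorph M (A × B)} {x : M} {X : Set M}

lemma slice_mem_target (h : StraightensWsLoc f α q χ) (hx : x ∈ WsLoc f α q) :
    ((χ x).1, 0) ∈ χ.target := by
  rw [← h.snd_eq_zero x hx]
  exact χ.map_source (h.subset_source hx)

lemma symm_slice (h : StraightensWsLoc f α q χ) (hx : x ∈ WsLoc f α q) :
    χ.symm ((χ x).1, 0) = x := by
  rw [← h.snd_eq_zero x hx]
  exact χ.left_inv (h.subset_source hx)

lemma continuousAt_symm_slice (h : StraightensWsLoc f α q χ) (hx : x ∈ WsLoc f α q) :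
    ContinuousAt (fun a => χ.symm (a, 0)) (χ x).1 :=
  (χ.symm.continuousAt (h.slice_mem_target hx)).comp (f := fun a => (a, (0 : B))) (by fun_prop)

lemma eventually_apply_symm_slice (h : StraightensWsLoc f α q χ) (hx : x ∈ WsLoc f α q) :
    ∀ᶠ a in 𝓝 (χ x).1, χ (χ.symm (a, 0)) = (a, 0) := by
  have : ∀ᶠ a in 𝓝 (χ x).1, (a, (0 : B)) ∈ χ.target :=
    (Continuous.prodMk_left (0 : B)).continuousAt.preimage_mem_nhds
      (χ.open_target.mem_nhds (h.slice_mem_target hx))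
  exact this.mono fun a ha => χ.right_inv ha

lemma isCompact_image_fst (h : StraightensWsLoc f α q χ) (hX : IsCompact X) :
    IsCompact ((fun x => (χ x).1) '' (X ∩ WsLoc f α q)) :=
  (hX.inter_right (isClosed_WsLoc f α q)).image_of_continuousOn
    (χ.continuousOn.fst.mono (inter_subset_right.trans h.subset_source))

lemma mem_interior_image_fst (h : StraightensWsLoc f α q χ) (hα : 0 ≤ α)
    (hx : x ∈ WsLoc f (α / 2) q) (hX : X ∈ 𝓝 x) :
    (χ x).1 ∈ interior ((fun x => (χ x).1) '' (X ∩ WsLoc f α q)) := by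
  have hxα : x ∈ WsLoc f α q := WsLoc_mono (half_le_self hα) hx
  have slice_tendsto : Tendsto (fun a => χ.symm (a, 0)) (𝓝 (χ x).1) (𝓝 x) := by
    simpa only [ContinuousAt, h.symm_slice hxα] using h.continuousAt_symm_slice hxα
  rw [mem_interior_iff_mem_nhds]
  filter_upwards [slice_tendsto.eventually (h.eventually_mem x hx), slice_tendsto hX,
    h.eventually_apply_symm_slice hxα] with a ha haX hχ
  exact ⟨χ.symm (a, 0), ⟨haX, ha (by rw [hχ])⟩, congrArg Prod.fst hχ⟩

lemma eventually_continuousAt_comp_symm (h : StraightensWsLoc f α q χ) {Y : Type*}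
    [TopologicalSpace Y] {φ : OpenPartialHomeomorph M Y} (hx : x ∈ WsLoc f α q)
    (hxφ : x ∈ φ.source) : ∀ᶠ w in 𝓝 (φ x), ContinuousAt (χ ∘ φ.symm) w := by
  have mem_nhds : χ.source ∈ 𝓝 (φ.symm (φ x)) := by
    rw [φ.left_inv hxφ]
    exact χ.open_source.mem_nhds (h.subset_source hx)
  filter_upwards [(φ.symm.continuousAt (φ.map_source hxφ)).preimage_mem_nhds mem_nhds,
    φ.open_target.mem_nhds (φ.map_source hxφ)] with w hwχ hwφ
  exact (χ.continuousAt hwχ).comp (φ.symm.continuousAt hwφ)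

end StraightensWsLoc

lemma isCompact_source_inter_preimage {X Y : Type*} [TopologicalSpace X] [TopologicalSpace Y]
    (φ : OpenPartialHomeomorph X Y) {K : Set Y} (hK : IsCompact K) (hKφ : K ⊆ φ.target) :
    IsCompact (φ.source ∩ φ ⁻¹' K) := by
  rw [← φ.symm_image_eq_source_inter_preimage hKφ]
  exact hK.image_of_continuousOn (φ.symm.continuousOn.mono hKφ)

variable {A' E : Type*} [NormedAddCommGroup A'] [NormedAddCommGroup E]

namespace StraightensWsLoc

variable {χ : OpenPartialHomeomorph M (A' × E)} {φ : OpenPartialHomeomorph M (A × B)} {ρ : ℝ}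
  {x : M}

lemma norm_snd_eq_of_mem_frontier (h : StraightensWsLoc f α q χ) (hα : 0 ≤ α)
    (half : φ.source ∩ φ ⁻¹' closedBall 0 ρ ∩ WsLoc f α q ⊆ WsLoc f (α / 2) q)
    (thin : ∀ x ∈ φ.source ∩ φ ⁻¹' closedBall 0 ρ ∩ WsLoc f α q, ‖(φ x).1‖ < ρ)
    (hx : x ∈ φ.source ∩ φ ⁻¹' closedBall 0 ρ ∩ WsLoc f α q)
    (hx_frontier : (χ x).1 ∈ frontier
      ((fun x => (χ x).1) '' (φ.source ∩ φ ⁻¹' closedBall 0 ρ ∩ WsLoc f α q))) :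
    ‖(φ x).2‖ = ρ := by
  by_contra hne
  have snd_lt : ‖(φ x).2‖ < ρ :=
    ((norm_snd_le _).trans (mem_closedBall_zero_iff.1 hx.1.2)).lt_of_ne hne
  have mem_ball : φ x ∈ ball 0 ρ := mem_ball_zero_iff.2 (max_lt (thin x hx) snd_lt)
  have box_nhds : φ.source ∩ φ ⁻¹' closedBall 0 ρ ∈ 𝓝 x :=
    mem_of_superset ((φ.isOpen_inter_preimage isOpen_ball).mem_nhds ⟨hx.1.1, mem_ball⟩)
      (inter_subset_inter_right _ (preimage_mono ball_subset_closedBall))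
  exact hx_frontier.2 (h.mem_interior_image_fst hα (half hx) box_nhds)

lemma eventually_mem_image (h : StraightensWsLoc f α q χ) (hx : x ∈ WsLoc f (α / 2) q)
    (hxφ : x ∈ φ.source) :
    ∀ᶠ w in 𝓝 (φ x), ‖w‖ ≤ ρ → (χ (φ.symm w)).2 = 0 →
      w ∈ φ '' (φ.source ∩ φ ⁻¹' closedBall 0 ρ ∩ WsLoc f α q) := by
  filter_upwards [(φ.eventually_nhds' _ hxφ).2 (h.eventually_mem x hx),
    φ.open_target.mem_nhds (φ.map_source hxφ)] with w hw hwφ hwρ hw0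
  exact ⟨φ.symm w, ⟨⟨φ.map_target hwφ, by simpa [φ.right_inv hwφ] using hwρ⟩, hw hw0⟩,
    φ.right_inv hwφ⟩

end StraightensWsLoc

variable [ProperSpace A] [NormedSpace ℝ B] [FiniteDimensional ℝ B] [NormedSpace ℝ E]
  [FiniteDimensional ℝ E]

/- In the box `φ.symm '' closedBall 0 ρ` the local unstable set of `q` is a disc of dimension
`finrank ℝ E` crossing the box vertically; by expansivity it meets the local stable set of `q`,
the zero set of `x ↦ (χs x).2`, only at `q`. -/
lemma finrank_le_of_straightensWsLoc (hf : IsExpansive f α) (hα : 0 ≤ α)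
    {φ : OpenPartialHomeomorph M (A × B)} {ρ : ℝ} (hρ : closedBall 0 ρ ⊆ φ.target)
    {χs : OpenPartialHomeomorph M (A' × E)} (hs : StraightensWsLoc f α q χs)
    {χu : OpenPartialHomeomorph M (E × A')} (hu : StraightensWsLoc f⁻¹ α q χu)
    (hχq : (χu q).1 = 0) {c : ℝ} (hc : 0 < c)
    (hsu : ∀ᶠ z in 𝓝 q, (χs z).2 = c • (χu z).1) (hq : q ∈ φ.source ∩ φ ⁻¹' ball 0 ρ)
    (hs_half : φ.source ∩ φ ⁻¹' closedBall 0 ρ ∩ WsLoc f α q ⊆ WsLoc f (α / 2) q)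
    (hu_half : φ.source ∩ φ ⁻¹' closedBall 0 ρ ∩ WsLoc f⁻¹ α q ⊆ WsLoc f⁻¹ (α / 2) q)
    (hs_thin : ∀ x ∈ φ.source ∩ φ ⁻¹' closedBall 0 ρ ∩ WsLoc f α q, ‖(φ x).2‖ < ρ / 2)
    (hu_thin : ∀ x ∈ φ.source ∩ φ ⁻¹' closedBall 0 ρ ∩ WsLoc f⁻¹ α q, ‖(φ x).1‖ < ρ) :
    finrank ℝ B ≤ finrank ℝ E := by
  set X : Set M := φ.source ∩ φ ⁻¹' closedBall 0 ρ
  have X_compact : IsCompact X := isCompact_source_inter_preimage φ (isCompact_closedBall 0 ρ) hρ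
  have hqX : q ∈ X := ⟨hq.1, ball_subset_closedBall hq.2⟩
  have hqs : q ∈ WsLoc f α q := self_mem_WsLoc hα
  have hqu : q ∈ WsLoc f⁻¹ α q := self_mem_WsLoc hα
  let e (y : E) : A × B := φ (χu.symm (y, 0))
  have e_apply {x : M} (hx : x ∈ WsLoc f⁻¹ α q) : e (χu x).1 = φ x := by
    simp only [e, hu.symm_slice hx]
  have K_compact := hu.isCompact_image_fst X_compact
  refine finrank_le_of_linking K_compact (e := e) ?_
    ((norm_nonneg _).trans_lt (mem_ball_zero_iff.1 hq.2)) ?_ ?_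
    (C := φ '' (X ∩ WsLoc f α q)) ?_ (forall_mem_image.2 hs_thin)
    (Θ := fun w => (χs (φ.symm w)).2) (eventually_nhdsSet_iff_forall.2 ?_)
    (eventually_nhdsSet_iff_forall.2 ?_) hc ?_ ?_ ⟨q, ⟨hqX, hqu⟩, hχq⟩
    ⟨q, ⟨hqX, hqs⟩, by rw [← hχq, e_apply hqu]⟩
  · rintro _ ⟨x, hx, rfl⟩
    refine ContinuousAt.continuousWithinAt (.comp ?_ (hu.continuousAt_symm_slice hx.2))
    rw [hu.symm_slice hx.2]
    exact φ.continuousAt hx.1.1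
  · rintro _ ⟨x, hx, rfl⟩
    rw [e_apply hx.2]
    exact mem_closedBall_zero_iff.1 hx.1.2
  · intro y hy
    obtain ⟨x, hx, rfl⟩ := K_compact.isClosed.frontier_subset hy
    rw [e_apply hx.2]
    exact hu.norm_snd_eq_of_mem_frontier hα hu_half hu_thin hx hy
  · exact (X_compact.inter_right (isClosed_WsLoc f α q)).image_of_continuousOn
      (φ.continuousOn.mono fun x hx => hx.1.1)
  · rintro _ ⟨x, hx, rfl⟩
    filter_upwards [hs.eventually_continuousAt_comp_symm hx.2 hx.1.1] with w hw using hw.snd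
  · rintro _ ⟨x, hx, rfl⟩
    exact hs.eventually_mem_image (hs_half hx) hx.1.1
  · have slice_tendsto := hu.continuousAt_symm_slice hqu
    rw [ContinuousAt, hu.symm_slice hqu, hχq] at slice_tendsto
    filter_upwards [slice_tendsto.eventually hsu, hχq ▸ hu.eventually_apply_symm_slice hqu,
      slice_tendsto (φ.open_source.mem_nhds hq.1)] with y hy hχ hyφ
    rw [φ.left_inv hyφ, hy, hχ]
  · rintro _ ⟨x, hx, rfl⟩ ⟨x', hx', hxx'⟩
    obtain rfl : x' = x := φ.injOn hx'.1.1 hx.1.1 (hxx'.trans (e_apply hx.2))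
    rw [← hf.eq_of_mem_WsLoc hx'.2 hx.2]
    exact hχq

end StraightenedStableSets

section HyperbolicCharts

variable {A B : Type*} [NormedAddCommGroup A] [NormedSpace ℝ A] [NormedAddCommGroup B]
  [NormedSpace ℝ B] {f : M ≃ₜ M} {α : ℝ} {l : ℕ} {q : M}
  {ψ : OpenPartialHomeomorph M (A × B)}

/-- `ψ` is a chart centred at the periodic point `q` which conjugates the return map `f ^ l` to the
model map `(a, b) ↦ (a / 2, 2 b)`; the factors may be any normed spaces, so that exchanging them
turns charts for `f` into charts for `f⁻¹`. -/
structure IsHyperbolicChart (f : M ≃ₜ M) (l : ℕ) (q : M) (ψ : OpenPartialHomeomorph M (A × B)) :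
    Prop where
  pos : 0 < l
  pow_apply : (f ^ l) q = q
  mem_source : q ∈ ψ.source
  apply_eq_zero : ψ q = 0
  conj : ∀ z ∈ ψ.source, (f ^ l) z ∈ ψ.source →
    ψ ((f ^ l) z) = ((1 / 2 : ℝ) • (ψ z).1, (2 : ℝ) • (ψ z).2)

namespace IsHyperbolicChart

lemma inv (h : IsHyperbolicChart f l q ψ) :
    IsHyperbolicChart f⁻¹ l q (ψ.transHomeomorph (.prodComm A B)) where
  pos := h.pos
  pow_apply := by
    rw [inv_pow, Homeomorph.inv_apply, Homeomorph.symm_apply_eq, h.pow_apply]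
  mem_source := h.mem_source
  apply_eq_zero := by simp [h.apply_eq_zero]
  conj z hz hz' := by
    have := h.conj (((f⁻¹) ^ l) z) hz' (by simpa using hz)
    simp only [inv_pow, Homeomorph.inv_apply, Homeomorph.apply_symm_apply] at this ⊢
    simp [this, smul_smul, Prod.swap]

lemma pow_mul_apply (h : IsHyperbolicChart f l q ψ) (j : ℕ) : (f ^ (l * j)) q = q := by
  induction j with
  | zero => rfl
  | succ j ih => rw [Nat.mul_succ, pow_add, Homeomorph.mul_apply, h.pow_apply, ih]

lemma nhds_hasBasis (h : IsHyperbolicChart f l q ψ) :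
    (𝓝 q).HasBasis (fun s : ℝ => 0 < s) fun s => ψ ⁻¹' ball 0 s ∩ ψ.source := by
  rw [ψ.nhds_eq_comap_inf_principal h.mem_source, h.apply_eq_zero]
  exact (nhds_basis_ball.comap ψ).inf_principal ψ.source

lemma eventually_pow_mul_mem_source (h : IsHyperbolicChart f l q ψ) (j : ℕ) :
    ∀ᶠ z in 𝓝 q, (f ^ (l * j)) z ∈ ψ.source :=
  (f ^ (l * j)).continuous.continuousAt.preimage_mem_nhds
    (by rw [h.pow_mul_apply]; exact ψ.open_source.mem_nhds h.mem_source)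

lemma snd_pow_mul (h : IsHyperbolicChart f l q ψ) {z : M} {j : ℕ}
    (hz : ∀ i ≤ j, (f ^ (l * i)) z ∈ ψ.source) :
    (ψ ((f ^ (l * j)) z)).2 = (2 : ℝ) ^ j • (ψ z).2 := by
  induction j with
  | zero => simp
  | succ j ih =>
    have next : (f ^ (l * (j + 1))) z = (f ^ l) ((f ^ (l * j)) z) := by
      rw [← Homeomorph.mul_apply, ← pow_add, Nat.mul_succ, Nat.add_comm]
    have conj := h.conj _ (hz j j.le_succ) (next ▸ hz (j + 1) le_rfl)
    rw [next, conj, ih fun i hi => hz i (hi.trans j.le_succ), smul_smul, pow_succ']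

lemma eventually_snd_pow_mul (h : IsHyperbolicChart f l q ψ) (j : ℕ) :
    ∀ᶠ z in 𝓝 q, (ψ ((f ^ (l * j)) z)).2 = (2 : ℝ) ^ j • (ψ z).2 := by
  have := (eventually_all_finite (finite_Iic j)).2 fun i _ => h.eventually_pow_mul_mem_source i
  filter_upwards [this] with z hz using h.snd_pow_mul hz

lemma snd_eq_zero_of_forall_norm_lt (h : IsHyperbolicChart f l q ψ) {z : M} {s : ℝ}
    (hz : ∀ j : ℕ, (f ^ (l * j)) z ∈ ψ ⁻¹' ball 0 s ∩ ψ.source) : (ψ z).2 = 0 := by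
  by_contra hne
  obtain ⟨j, hj⟩ := pow_unbounded_of_one_lt (s / ‖(ψ z).2‖) (one_lt_two : (1 : ℝ) < 2)
  rw [div_lt_iff₀ (norm_pos_iff.2 hne)] at hj
  have lt_s := (norm_snd_le _).trans_lt (mem_ball_zero_iff.1 (hz j).1)
  rw [h.snd_pow_mul fun i _ => (hz i).2, norm_smul, norm_pow, Real.norm_two] at lt_s
  exact lt_s.not_gt hj

lemma exists_WsLoc_subset (h : IsHyperbolicChart f l q ψ) :
    ∃ η > 0, WsLoc f η q ⊆ ψ.source ∩ {z | (ψ z).2 = 0} := by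
  obtain ⟨η, hη, hbox⟩ := nhds_basis_closedBall.mem_iff.1 (h.nhds_hasBasis.mem_of_mem one_pos)
  refine ⟨η, hη, fun z hz => ?_⟩
  have orbit (j : ℕ) : (f ^ (l * j)) z ∈ ψ ⁻¹' ball 0 1 ∩ ψ.source := hbox <| by
    simpa [h.pow_mul_apply, dist_comm] using mem_WsLoc_iff.1 hz (l * j)
  exact ⟨(orbit 0).2, h.snd_eq_zero_of_forall_norm_lt orbit⟩

lemma mapsTo_pow_snd_eq_zero (h : IsHyperbolicChart f l q ψ) {s : ℝ}
    (hs : ψ ⁻¹' ball 0 s ∩ ψ.source ⊆ (f ^ l) ⁻¹' ψ.source) (j : ℕ) :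
    MapsTo (f ^ (l * j)) {z ∈ ψ ⁻¹' ball 0 s ∩ ψ.source | (ψ z).2 = 0}
      {z ∈ ψ ⁻¹' ball 0 s ∩ ψ.source | (ψ z).2 = 0} := by
  have once : MapsTo (f ^ l) {z ∈ ψ ⁻¹' ball 0 s ∩ ψ.source | (ψ z).2 = 0}
      {z ∈ ψ ⁻¹' ball 0 s ∩ ψ.source | (ψ z).2 = 0} := fun z ⟨hz, hz0⟩ => by
    have conj := h.conj z hz.2 (hs hz)
    have hzs : ‖ψ z‖ < s := mem_ball_zero_iff.1 hz.1
    refine ⟨⟨mem_ball_zero_iff.2 ?_, hs hz⟩, by simp [conj, hz0]⟩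
    calc ‖ψ ((f ^ l) z)‖ = 1 / 2 * ‖(ψ z).1‖ := by
          rw [conj, hz0, smul_zero, Prod.norm_mk, norm_zero, norm_smul, max_eq_left (by positivity),
            Real.norm_of_nonneg (by positivity)]
      _ ≤ ‖(ψ z).1‖ := mul_le_of_le_one_left (norm_nonneg _) (by norm_num)
      _ < s := (norm_fst_le _).trans_lt hzs
  induction j with
  | zero => exact mapsTo_id _
  | succ j ih =>
    rw [Nat.mul_succ, pow_add]
    exact ih.comp once

lemma eventually_mem_WsLoc (h : IsHyperbolicChart f l q ψ) (hα : 0 < α) :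
    ∀ᶠ z in 𝓝 q, (ψ z).2 = 0 → z ∈ WsLoc f α q := by
  have close : ∀ᶠ z in 𝓝 q, ∀ i ∈ Iio l, dist ((f ^ i) q) ((f ^ i) z) < α :=
    (eventually_all_finite (finite_Iio l)).2 fun i _ =>
      (continuous_const.dist (f ^ i).continuous).continuousAt.eventually_lt_const
        (by simpa using hα)
  have return_mem := h.eventually_pow_mul_mem_source 1
  rw [mul_one] at return_mem
  obtain ⟨s, hs, hbox⟩ := h.nhds_hasBasis.mem_iff.1 (close.and return_mem)
  filter_upwards [h.nhds_hasBasis.mem_of_mem hs] with z hz hz0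
  refine mem_WsLoc_iff.2 fun i => ?_
  have orbit := h.mapsTo_pow_snd_eq_zero (fun z hz => (hbox hz).2) (i / l) ⟨hz, hz0⟩
  have := (hbox orbit.1).1 (i % l) (Nat.mod_lt i h.pos)
  rw [← Nat.mod_add_div i l, pow_add, Homeomorph.mul_apply, Homeomorph.mul_apply, h.pow_mul_apply]
  exact this.le

lemma eventually_snd_eq_zero [CompactSpace M] (h : IsHyperbolicChart f l q ψ)
    (hf : IsExpansive f α) : ∀ᶠ z in 𝓝 q, z ∈ WsLoc f α q → (ψ z).2 = 0 := by
  obtain ⟨η, hη, hsub⟩ := h.exists_WsLoc_subset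
  filter_upwards [Uniform.tendsto_nhds_right.1 tendsto_id (hf.eventually_mem_WsLoc hη)]
    with z hz hzα using (hsub (hz hzα)).2

end IsHyperbolicChart

lemma IsHyperbolicChart.exists_straightensWsLoc [CompactSpace M] (h : IsHyperbolicChart f l q ψ)
    (hf : IsExpansive f α) (hα : 0 < α) :
    ∃ N : ℕ, StraightensWsLoc f α q ((f ^ (l * N)).transOpenPartialHomeomorph ψ) := by
  obtain ⟨η, hη, hsub⟩ := h.exists_WsLoc_subset
  obtain ⟨δ, hδ, hball⟩ :=
    nhds_basis_ball.eventually_iff.1 (eventually_eventually_nhds.2 (h.eventually_mem_WsLoc hα))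
  obtain ⟨N, hN⟩ := hf.exists_forall_dist_pow_lt (lt_min hη hδ)
  have close {x : M} (hx : x ∈ WsLoc f α q) {i : ℕ} (hi : l * N ≤ i) :
      dist ((f ^ i) q) ((f ^ i) x) < min η δ :=
    hN q x hx i ((Nat.le_mul_of_pos_left N h.pos).trans hi)
  have image_mem {x : M} (hx : x ∈ WsLoc f α q) : (f ^ (l * N)) x ∈ WsLoc f η q := by
    refine mem_WsLoc_iff.2 fun i => ?_
    have := (close hx (Nat.le_add_left (l * N) i)).le.trans (min_le_left _ _)
    rwa [pow_add, Homeomorph.mul_apply, Homeomorph.mul_apply, h.pow_mul_apply] at this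
  refine ⟨N, fun x hx => (hsub (image_mem hx)).1, fun x hx => (hsub (image_mem hx)).2,
    fun x hx => ?_⟩
  have hxα : x ∈ WsLoc f α q := WsLoc_mono (half_le_self hα.le) hx
  have initial : ∀ᶠ z in 𝓝 x, ∀ i ∈ Iio (l * N), dist ((f ^ i) q) ((f ^ i) z) < α :=
    (eventually_all_finite (finite_Iio _)).2 fun i _ =>
      (continuous_const.dist (f ^ i).continuous).continuousAt.eventually_lt_const
        ((mem_WsLoc_iff.1 hx i).trans_lt (half_lt_self hα))
  have tail : ∀ᶠ z in 𝓝 x, (ψ ((f ^ (l * N)) z)).2 = 0 → (f ^ (l * N)) z ∈ WsLoc f α q := by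
    refine (f ^ (l * N)).continuous.continuousAt.eventually (hball ?_)
    have := (close hxα le_rfl).trans_le (min_le_right _ _)
    rwa [h.pow_mul_apply, ← mem_ball'] at this
  filter_upwards [initial, tail] with z hz htail hz0
  refine mem_WsLoc_iff.2 fun i => ?_
  rcases lt_or_ge i (l * N) with hi | hi
  · exact (hz i hi).le
  · obtain ⟨j, rfl⟩ := Nat.exists_eq_add_of_le' hi
    simpa only [pow_add, Homeomorph.mul_apply, h.pow_mul_apply] using
      mem_WsLoc_iff.1 (htail hz0) j

namespace IsHyperbolicChart

lemma eventually_snd_pow_mul_eq (h : IsHyperbolicChart f l q ψ) (N N' : ℕ) :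
    ∀ᶠ z in 𝓝 q, (ψ ((f ^ (l * N)) z)).2 = (2 : ℝ) ^ (N + N') • (ψ ((f⁻¹ ^ (l * N')) z)).2 := by
  have tendsto : Tendsto (f⁻¹ ^ (l * N')) (𝓝 q) (𝓝 q) := by
    simpa only [h.inv.pow_mul_apply] using (f⁻¹ ^ (l * N')).continuous.tendsto q
  filter_upwards [tendsto.eventually (h.eventually_snd_pow_mul (N + N'))] with z hz
  rw [← hz, mul_add, pow_add, ← Homeomorph.mul_apply, mul_assoc, inv_pow, mul_inv_cancel, mul_one]

lemma eventually_closedBall_subset_target (h : IsHyperbolicChart f l q ψ) :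
    ∀ᶠ ρ in 𝓝[>] (0 : ℝ), closedBall 0 ρ ⊆ ψ.target :=
  nhdsWithin_le_nhds <| eventually_closedBall_subset <|
    h.apply_eq_zero ▸ ψ.open_target.mem_nhds (ψ.map_source h.mem_source)

lemma eventually_box_subset (h : IsHyperbolicChart f l q ψ) {s : Set M} (hs : s ∈ 𝓝 q) :
    ∀ᶠ ρ in 𝓝[>] (0 : ℝ), ψ.source ∩ ψ ⁻¹' closedBall 0 ρ ⊆ s := by
  obtain ⟨r, hr, hrs⟩ := h.nhds_hasBasis.mem_iff.1 hs
  filter_upwards [Ioo_mem_nhdsGT hr] with ρ hρ x hx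
  exact hrs ⟨closedBall_subset_ball hρ.2 hx.2, hx.1⟩

lemma eventually_forall_box [CompactSpace M] [ProperSpace A] [ProperSpace B]
    (h : IsHyperbolicChart f l q ψ) (hf : IsExpansive f α) (hα : 0 < α) :
    ∀ᶠ ρ in 𝓝[>] 0, ∀ᶠ q' in 𝓝 q, ∀ x ∈ ψ.source ∩ ψ ⁻¹' closedBall 0 ρ ∩ WsLoc f α q',
      x ∈ WsLoc f (α / 2) q' ∧ ‖(ψ x).2‖ < ρ / 2 := by
  obtain ⟨t, ht, half⟩ := eventually_prod_self_iff'.1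
    (nhds_prod_eq.ge.trans (nhds_le_uniformity q) (hf.eventually_mem_WsLoc (half_pos hα)))
  filter_upwards [h.eventually_box_subset ht, h.eventually_box_subset (h.eventually_snd_eq_zero hf),
    h.eventually_closedBall_subset_target, self_mem_nhdsWithin] with ρ box_t box_zero box_target hρ
  have U_open : IsOpen ((ψ.source ∩ ψ ⁻¹' closedBall 0 ρ)ᶜ ∪
      ψ.source ∩ ψ ⁻¹' {w | ‖w.2‖ < ρ / 2}) :=
    (isCompact_source_inter_preimage ψ (isCompact_closedBall 0 ρ) box_target).isClosed.isOpen_compl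
      |>.union (ψ.isOpen_inter_preimage (isOpen_lt (by fun_prop) continuous_const))
  have WsLoc_subset : WsLoc f α q ⊆ (ψ.source ∩ ψ ⁻¹' closedBall 0 ρ)ᶜ ∪
      ψ.source ∩ ψ ⁻¹' {w | ‖w.2‖ < ρ / 2} := fun x hx => by
    by_cases hxX : x ∈ ψ.source ∩ ψ ⁻¹' closedBall 0 ρ
    · refine .inr ⟨hxX.1, ?_⟩
      have := box_zero hxX hx
      simpa [this] using hρ
    · exact .inl hxX
  filter_upwards [eventually_WsLoc_subset U_open WsLoc_subset, ht] with q' thin hq' x hx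
  exact ⟨half q' hq' x (box_t hx.1) hx.2, ((thin hx.2).resolve_left (not_not.2 hx.1)).2⟩

variable [FiniteDimensional ℝ A] [FiniteDimensional ℝ B] [CompactSpace M]

lemma eventually_finrank_le (h : IsHyperbolicChart f l q ψ) (hf : IsExpansive f α) (hα : 0 < α) :
    ∀ᶠ q' in 𝓝 q, ∀ {A' E : Type*} [NormedAddCommGroup A'] [NormedSpace ℝ A']
      [NormedAddCommGroup E] [NormedSpace ℝ E] [FiniteDimensional ℝ E] {l' : ℕ}
      {χ : OpenPartialHomeomorph M (A' × E)}, IsHyperbolicChart f l' q' χ →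
      finrank ℝ B ≤ finrank ℝ E := by
  obtain ⟨ρ, stable, unstable, box_target, hρ⟩ := ((h.eventually_forall_box hf hα).and
    ((h.inv.eventually_forall_box hf.inv hα).and
      (h.eventually_closedBall_subset_target.and self_mem_nhdsWithin))).exists
  have box_inv : ψ.transHomeomorph (.prodComm A B) ⁻¹' closedBall 0 ρ = ψ ⁻¹' closedBall 0 ρ := by
    ext x
    simp [Prod.norm_def, max_comm]
  simp only [box_inv] at unstable
  filter_upwards [stable, unstable, h.nhds_hasBasis.mem_of_mem hρ]
    with q' mem_stable mem_unstable hq' A' E _ _ _ _ _ l' χ hχ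
  obtain ⟨N, hs⟩ := hχ.exists_straightensWsLoc hf hα
  obtain ⟨N', hu⟩ := hχ.inv.exists_straightensWsLoc hf.inv hα
  refine finrank_le_of_straightensWsLoc hf hα.le box_target hs hu ?_ (by positivity)
    (hχ.eventually_snd_pow_mul_eq N N') hq'.symm (fun x hx => (mem_stable x hx).1)
    (fun x hx => (mem_unstable x hx).1) (fun x hx => (mem_stable x hx).2)
    fun x hx => (mem_unstable x hx).2.trans (half_lt_self hρ)
  change (χ ((f⁻¹ ^ (l' * N')) q')).2 = 0
  rw [hχ.inv.pow_mul_apply, hχ.apply_eq_zero, Prod.snd_zero]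

end IsHyperbolicChart

end HyperbolicCharts

section PeriodicPoints

variable {f : M ≃ₜ M} {α : ℝ} {n r : ℕ} {p : M}

lemma exists_isHyperbolicChart (hp : p ∈ PerHr f n r) :
    ∃ (l : ℕ) (φ : OpenPartialHomeomorph M (ModelSp n r)), IsHyperbolicChart f l p φ := by
  obtain ⟨l, hl, hper, U, V, h, hU, hV, h0, hpU, hp0, hconj⟩ := hp
  have : Nonempty U := ⟨p, hpU⟩
  have : Nonempty V := ⟨0, h0⟩
  have pow_apply (z : M) : (f.toEquiv ^ l) z = (f ^ l) z := by
    rw [← zpow_natCast, ← toEquiv_zpow, zpow_natCast]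
    rfl
  let φ : OpenPartialHomeomorph M (ModelSp n r) :=
    hU.isOpenEmbedding_subtypeVal.toOpenPartialHomeomorph.symm.transHomeomorph h |>.trans
      hV.isOpenEmbedding_subtypeVal.toOpenPartialHomeomorph
  have source_eq : φ.source = U := by simp [φ]
  have apply_eq (z : M) (hz : z ∈ U) : φ z = h ⟨z, hz⟩ := by
    have := hU.isOpenEmbedding_subtypeVal.toOpenPartialHomeomorph_left_inv (x := ⟨z, hz⟩)
    simp [φ, this]
  refine ⟨l, φ, hl, pow_apply p ▸ hper, source_eq ▸ hpU, by rw [apply_eq p hpU, hp0], ?_⟩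
  rw [source_eq]
  intro z hz hz'
  have := hconj z hz (pow_apply z ▸ hz')
  simp only [pow_apply] at this
  rw [apply_eq _ hz', apply_eq _ hz, this]
  ext i <;> simp [modelL, div_eq_inv_mul]

variable [CompactSpace M]

lemma eventually_index_eq {k : ℕ} (hf : IsExpansive f α) (hα : 0 < α) (hp : p ∈ PerHr f n k) :
    ∀ᶠ q in 𝓝 p, ∀ r ≤ n, q ∈ PerHr f n r → r = k := by
  obtain ⟨l, φ, hφ⟩ := exists_isHyperbolicChart hp
  filter_upwards [hφ.eventually_finrank_le hf hα, hφ.inv.eventually_finrank_le hf.inv hα]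
    with q unstable stable r hr hq
  obtain ⟨l', ψ, hψ⟩ := exists_isHyperbolicChart hq
  have unstable_le := unstable hψ
  have stable_le := stable hψ.inv
  rw [finrank_fin_fun, finrank_fin_fun] at unstable_le stable_le
  lia

theorem stmt9_general (hf : IsExpansive f α) (hα : 0 < α) (n k : ℕ) :
    ∀ p ∈ PerHr f n k, ∃ V : Set M, IsOpen V ∧ p ∈ V ∧ PerH f n ∩ V ⊆ PerHr f n k := by
  intro p hp
  obtain ⟨V, index_eq, V_open, hpV⟩ :=
    _root_.eventually_nhds_iff.1 (eventually_index_eq hf hα hp)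
  refine ⟨V, V_open, hpV, fun q ⟨hq, hqV⟩ => ?_⟩
  simp only [PerH, mem_iUnion₂, Finset.mem_range_succ_iff] at hq
  obtain ⟨r, hr, hqr⟩ := hq
  exact index_eq q hqV r hr hqr ▸ hqr

end PeriodicPoints

/-- **Proposition (1).** For an expansive homeomorphism of a compact connected boundaryless
`n`-manifold, each `Per_H^k` (`1 ≤ k ≤ n-1`) is open in `Per_H`. -/
theorem stmt9 {M : Type*} [MetricSpace M] [CompactSpace M] [ConnectedSpace M]
    (n : ℕ) [ChartedSpace (EuclideanSpace ℝ (Fin n)) M]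
    (f : M ≃ₜ M) (α : ℝ) (hα : 0 < α) (hexp : IsExpansive f α) :
    ∀ k : ℕ, 1 ≤ k → k ≤ n - 1 →
      ∀ p ∈ PerHr f n k, ∃ V : Set M, IsOpen V ∧ p ∈ V ∧ PerH f n ∩ V ⊆ PerHr f n k :=
  fun k _ _ => stmt9_general hexp hα n k
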